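/- Let p ≥ 6, u = 2^(−p), and let RN be a symmetric round-to-nearest function whose tie-breaking rule is ties-to-even or ties-to-away. Let x_h, x_l, y_h, y_l ∈ F_p with RN(x_h + x_l) = x_h, RN(y_h + y_l) = y_h, x_h·y_h < 0, and suppose |x_h| and |y_h| are two consecutive floating-point numbers, i.e. |x_h| ≠ |y_h| and no f ∈ F_p satisfies min(|x_h|, |y_h|) < f < max(|x_h|, |y_h|). Then S = x_h + x_l + y_h + y_l ≠ 0 and the output of sloppy double-word addition with rounding RN satisfies |z_h + z_l − S| < 2·|S|. -/

import Mathlib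

/-- The radix-2, precision-`p` floating-point numbers with unlimited exponent range. -/
def Fp (p : ℕ) : Set ℝ := {x : ℝ | ∃ M e : ℤ, |M| ≤ 2 ^ p - 1 ∧ x = (M : ℝ) * (2 : ℝ) ^ e}

/-- Round toward `-∞`: the largest floating-point number `≤ x`. -/
noncomputable def RD (p : ℕ) (x : ℝ) : ℝ := sSup {f : ℝ | f ∈ Fp p ∧ f ≤ x}

/-- Round toward `+∞`: the smallest floating-point number `≥ x`. -/
noncomputable def RU (p : ℕ) (x : ℝ) : ℝ := sInf {f : ℝ | f ∈ Fp p ∧ x ≤ f}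

/-- `y` is a faithful rounding of `x`. -/
def Faithful (p : ℕ) (x y : ℝ) : Prop := y = RD p x ∨ y = RU p x

/-- `RN` is a round-to-nearest function for precision `p`. -/
def IsRN (p : ℕ) (RN : ℝ → ℝ) : Prop :=
  (∀ x : ℝ, RN x ∈ Fp p) ∧ ∀ x f : ℝ, f ∈ Fp p → |RN x - x| ≤ |f - x|

/-- `RN` is symmetric. -/
def SymRN (RN : ℝ → ℝ) : Prop := ∀ x : ℝ, RN (-x) = -RN x

/-- A nonzero `f ∈ F_p` is *even* if `f · 2^(-e_f)` is an even integer, where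
`e_f = ⌊log₂ |f|⌋ - p + 1`; `0` is even. -/
def FpEven (p : ℕ) (f : ℝ) : Prop :=
  f = 0 ∨ ∃ m : ℤ, Even m ∧ f = (m : ℝ) * (2 : ℝ) ^ (Int.log 2 |f| - (p : ℤ) + 1)

/-- `RN` breaks ties to even. -/
def TiesToEven (p : ℕ) (RN : ℝ → ℝ) : Prop :=
  ∀ x : ℝ, RD p x ≠ RU p x → |x - RD p x| = |RU p x - x| →
    (RN x = RD p x ∨ RN x = RU p x) ∧ FpEven p (RN x)

/-- `RN` breaks ties away from zero. -/
def TiesToAway (p : ℕ) (RN : ℝ → ℝ) : Prop :=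
  ∀ x : ℝ, RD p x ≠ RU p x → |x - RD p x| = |RU p x - x| →
    (RN x = RD p x ∨ RN x = RU p x) ∧ |RN x| = max |RD p x| |RU p x|

/-- Sloppy double-word addition with rounding function `R`. -/
noncomputable def sloppyAdd (R : ℝ → ℝ) (xh xl yh yl : ℝ) : ℝ × ℝ :=
  let sh := R (xh + yh)
  let a' := R (sh - yh)
  let b' := R (sh - a')
  let sl := R (R (xh - a') + R (yh - b'))
  let v := R (xl + yl)
  let w := R (sl + v)
  let zh := R (sh + w)
  let d := R (zh - sh)
  let zl := R (w - d)
  (zh, zl)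

/-!
Negating and exchanging the operands, assume `0 < -y_h < x_h`. Then `x_h + y_h = g` for a power of
two `g`, and this sum is computed exactly, so the first error-free transformation yields `s_l = 0`
and the algorithm returns Fast2Sum of `g` and `v = RN (x_l + y_l)`.

Put `t = x_l + y_l`, so that `S = g + t`, and `h = 2 ^ (-p) * g`. The distances to the neighbours of
`x_h` and `y_h` give `-g/2 ≤ x_l ≤ g` and `|y_l| ≤ g/2`, hence `-g ≤ t ≤ 3g/2`; moreover `S ≠ 0`,
since `x_h + x_l = -(y_h + y_l)` would round both to `x_h` and to `-y_h`.

* If `t > -g/2`, then `2 * |S| > g`, whereas all rounding errors together are at most `4h ≤ g`.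
* If `t ≤ -g/2`, then `g/2 ≤ -v ≤ g`, so `g + v` is a floating-point number by Sterbenz' lemma,
  Fast2Sum is exact, and the error is `|v - t| ≤ h/2`. Either one of `x_l`, `y_l` exceeds `-g/4`, so
  that `S ≥ g/4`, or both of them, and with them `S`, are multiples of `h/2`, so that `S ≥ h/2`.
-/

/-- The grid `2 ^ k ℤ`. Working in this subgroup replaces computations with significands: a
floating-point number lies on the grid given by its exponent, and a point of the grid that is not
too large is a floating-point number. -/
noncomputable abbrev dyadicGrid (k : ℤ) : AddSubgroup ℝ := AddSubgroup.zmultiples ((2 : ℝ) ^ k)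

section DyadicGrid

variable {k l : ℤ} {x y : ℝ}

lemma mem_dyadicGrid : x ∈ dyadicGrid k ↔ ∃ m : ℤ, (m : ℝ) * 2 ^ k = x := by
  simp only [AddSubgroup.mem_zmultiples_iff, zsmul_eq_mul]

lemma zpow_mem_dyadicGrid (h : k ≤ l) : (2 : ℝ) ^ l ∈ dyadicGrid k := by
  obtain ⟨n, rfl⟩ := Int.le.dest h
  refine mem_dyadicGrid.2 ⟨2 ^ n, ?_⟩
  rw [zpow_add₀ two_ne_zero, zpow_natCast, mul_comm]
  push_cast
  rfl

lemma dyadicGrid_antitone : Antitone dyadicGrid := fun _ _ h =>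
  AddSubgroup.zmultiples_le_of_mem (zpow_mem_dyadicGrid h)

lemma zpow_le_of_mem_dyadicGrid (hx : x ∈ dyadicGrid k) (h0 : 0 < x) : (2 : ℝ) ^ k ≤ x := by
  obtain ⟨m, rfl⟩ := mem_dyadicGrid.1 hx
  have hg : (0 : ℝ) < 2 ^ k := by positivity
  have hm : 0 < m := by exact_mod_cast pos_of_mul_pos_left h0 hg.le
  exact le_mul_of_one_le_left hg.le (by exact_mod_cast hm)

lemma add_zpow_le_of_mem_dyadicGrid (hx : x ∈ dyadicGrid k) (hy : y ∈ dyadicGrid k) (h : x < y) :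
    x + (2 : ℝ) ^ k ≤ y :=
  le_sub_iff_add_le'.1 (zpow_le_of_mem_dyadicGrid (sub_mem hy hx) (sub_pos.2 h))

lemma exists_mem_dyadicGrid_abs_sub_le (k : ℤ) (x : ℝ) :
    ∃ f ∈ dyadicGrid k, |f - x| ≤ (2 : ℝ) ^ k / 2 := by
  have hg : (0 : ℝ) < 2 ^ k := by positivity
  refine ⟨round (x / 2 ^ k) * 2 ^ k, mem_dyadicGrid.2 ⟨_, rfl⟩, ?_⟩
  calc |round (x / 2 ^ k) * 2 ^ k - x| = |x / 2 ^ k - round (x / 2 ^ k)| * 2 ^ k := by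
        rw [← abs_of_pos hg, ← abs_mul, abs_of_pos hg, sub_mul, div_mul_cancel₀ x hg.ne',
          abs_sub_comm]
    _ ≤ 1 / 2 * 2 ^ k := by gcongr; exact abs_sub_round _
    _ = 2 ^ k / 2 := by ring

end DyadicGrid

section Fp

variable {p : ℕ} {k : ℤ} {x y : ℝ}

lemma zero_mem_Fp (p : ℕ) : (0 : ℝ) ∈ Fp p :=
  ⟨0, 0, by simp [one_le_pow₀], by simp⟩

lemma neg_mem_Fp (hx : x ∈ Fp p) : -x ∈ Fp p := by
  obtain ⟨M, e, hM, rfl⟩ := hx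
  exact ⟨-M, e, by rwa [abs_neg], by push_cast; ring⟩

lemma abs_mem_Fp (hx : x ∈ Fp p) : |x| ∈ Fp p :=
  (abs_choice x).elim (fun h => h.symm ▸ hx) (fun h => h.symm ▸ neg_mem_Fp hx)

lemma two_mul_mem_Fp (hx : x ∈ Fp p) : 2 * x ∈ Fp p := by
  obtain ⟨M, e, hM, rfl⟩ := hx
  exact ⟨M, e + 1, hM, by rw [zpow_add_one₀ two_ne_zero]; ring⟩

lemma mem_Fp_of_abs_lt (hx : x ∈ dyadicGrid k) (h : |x| < (2 : ℝ) ^ (k + p)) : x ∈ Fp p := by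
  obtain ⟨m, rfl⟩ := mem_dyadicGrid.1 hx
  have hg : (0 : ℝ) < 2 ^ k := by positivity
  rw [abs_mul, abs_of_pos hg, zpow_add₀ two_ne_zero, zpow_natCast, mul_comm,
    mul_lt_mul_iff_right₀ hg] at h
  have hm : |m| < 2 ^ p := by exact_mod_cast h
  exact ⟨m, k, by omega, rfl⟩

lemma zpow_mem_Fp (hp : p ≠ 0) (k : ℤ) : (2 : ℝ) ^ k ∈ Fp p := by
  refine mem_Fp_of_abs_lt (zpow_mem_dyadicGrid le_rfl) ?_
  rw [abs_of_pos (by positivity)]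
  exact zpow_lt_zpow_right₀ one_lt_two (by omega)

lemma mem_Fp_of_abs_le (hp : p ≠ 0) (hx : x ∈ dyadicGrid k) (h : |x| ≤ (2 : ℝ) ^ (k + p)) :
    x ∈ Fp p := by
  rcases h.lt_or_eq with hlt | heq
  · exact mem_Fp_of_abs_lt hx hlt
  · rcases eq_or_eq_neg_of_abs_eq heq with rfl | rfl
    · exact zpow_mem_Fp hp _
    · exact neg_mem_Fp (zpow_mem_Fp hp _)

lemma mem_dyadicGrid_of_le_abs (hx : x ∈ Fp p) (h : (2 : ℝ) ^ (k + p - 1) ≤ |x|) :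
    x ∈ dyadicGrid k := by
  obtain ⟨M, e, hM, rfl⟩ := hx
  have hMp : |(M : ℝ)| < 2 ^ p := by exact_mod_cast Int.lt_of_le_sub_one hM
  have hlt : (2 : ℝ) ^ (k + p - 1) < 2 ^ (p + e) :=
    calc (2 : ℝ) ^ (k + p - 1) ≤ |(M : ℝ) * 2 ^ e| := h
      _ = |(M : ℝ)| * 2 ^ e := by rw [abs_mul, abs_zpow, abs_two]
      _ < 2 ^ p * 2 ^ e := by gcongr
      _ = 2 ^ (p + e) := by rw [zpow_add₀ two_ne_zero, zpow_natCast]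
  have hke : k ≤ e := by
    have := (zpow_lt_zpow_iff_right₀ one_lt_two).1 hlt
    omega
  exact dyadicGrid_antitone hke (mem_dyadicGrid.2 ⟨M, rfl⟩)

lemma exists_mem_dyadicGrid_of_mem_Fp (hx : x ∈ Fp p) (h0 : 0 < x) :
    ∃ k : ℤ, x ∈ dyadicGrid k ∧ (2 : ℝ) ^ (k + p - 1) ≤ x ∧ x < (2 : ℝ) ^ (k + p) := by
  obtain ⟨n, hlo, hhi⟩ := exists_mem_Ico_zpow h0 (one_lt_two (α := ℝ))
  have hlo' : (2 : ℝ) ^ (n + 1 - p + p - 1) ≤ x := by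
    rwa [sub_add_cancel, add_sub_cancel_right]
  exact ⟨n + 1 - p, mem_dyadicGrid_of_le_abs hx (by rwa [abs_of_pos h0]), hlo',
    by rwa [sub_add_cancel]⟩

/-- Sterbenz' lemma. -/
lemma sub_mem_Fp_of_le_two_mul (hx : x ∈ Fp p) (hy : y ∈ Fp p) (hyx : y ≤ 2 * x) (hxy : x ≤ 2 * y) :
    x - y ∈ Fp p := by
  wlog hle : y ≤ x generalizing x y
  · simpa using neg_mem_Fp (this hy hx hxy hyx (le_of_not_ge hle))
  rcases (by linarith : 0 ≤ y).eq_or_lt with rfl | hy0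
  · simpa using hx
  obtain ⟨k, hyk, hlo, hhi⟩ := exists_mem_dyadicGrid_of_mem_Fp hy hy0
  have hxk : x ∈ dyadicGrid k :=
    mem_dyadicGrid_of_le_abs hx (hlo.trans (hle.trans (le_abs_self x)))
  refine mem_Fp_of_abs_lt (sub_mem hxk hyk) ?_
  rw [abs_of_nonneg (sub_nonneg.2 hle)]
  linarith

end Fp

/-- `A` is the successor of `B` among the floating-point numbers of precision `p`. -/
structure Consecutive (p : ℕ) (B A : ℝ) : Prop where
  left_mem : B ∈ Fp p
  right_mem : A ∈ Fp p
  lt : B < A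
  le_of_lt : ∀ f ∈ Fp p, B < f → A ≤ f

namespace Consecutive

variable {p : ℕ} {A B : ℝ}

lemma of_not_exists_between (hB : B ∈ Fp p) (hA : A ∈ Fp p) (hlt : B < A)
    (h : ¬∃ f ∈ Fp p, B < f ∧ f < A) : Consecutive p B A :=
  ⟨hB, hA, hlt, fun f hf hBf => not_lt.1 fun hfA => h ⟨f, hf, hBf, hfA⟩⟩

protected lemma sub_mem (h : Consecutive p B A) (hB : 0 < B) : A - B ∈ Fp p :=
  sub_mem_Fp_of_le_two_mul h.right_mem h.left_mem (by linarith [h.lt])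
    (h.le_of_lt _ (two_mul_mem_Fp h.left_mem) (by linarith))

lemma exists_sub_eq_zpow (h : Consecutive p B A) (hp : p ≠ 0) (hB : 0 < B) :
    ∃ k : ℤ, A - B = (2 : ℝ) ^ k ∧ A ≤ (2 : ℝ) ^ (k + p) := by
  obtain ⟨k, hBk, hlo, hhi⟩ := exists_mem_dyadicGrid_of_mem_Fp h.left_mem hB
  have hg : (0 : ℝ) < 2 ^ k := by positivity
  have hAk : A ∈ dyadicGrid k :=
    mem_dyadicGrid_of_le_abs h.right_mem (hlo.trans (h.lt.le.trans (le_abs_self A)))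
  have hsucc : B + 2 ^ k ≤ (2 : ℝ) ^ (k + p) :=
    add_zpow_le_of_mem_dyadicGrid hBk (zpow_mem_dyadicGrid (by omega)) hhi
  have hsucc_mem : B + 2 ^ k ∈ Fp p :=
    mem_Fp_of_abs_le hp (add_mem hBk (zpow_mem_dyadicGrid le_rfl))
      (by rwa [abs_of_pos (by positivity)])
  have hA : A = B + 2 ^ k := le_antisymm (h.le_of_lt _ hsucc_mem (lt_add_of_pos_right B hg))
    (add_zpow_le_of_mem_dyadicGrid hBk hAk h.lt)
  exact ⟨k, by rw [hA, add_sub_cancel_left], hA ▸ hsucc⟩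

end Consecutive

namespace IsRN

variable {p : ℕ} {RN : ℝ → ℝ} {k : ℤ} {f x : ℝ}

lemma apply_eq_self (hRN : IsRN p RN) (hf : f ∈ Fp p) : RN f = f := by
  simpa [sub_eq_zero] using hRN.2 f f hf

lemma le_apply (hRN : IsRN p RN) (hf : f ∈ Fp p) (h : f ≤ x) : f ≤ RN x := by
  have := hRN.2 x f hf
  grind

lemma apply_le (hRN : IsRN p RN) (hf : f ∈ Fp p) (h : x ≤ f) : RN x ≤ f := by
  have := hRN.2 x f hf
  grind

lemma abs_apply_le (hRN : IsRN p RN) (hf : f ∈ Fp p) (h : |x| ≤ f) : |RN x| ≤ f :=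
  abs_le.2 ⟨hRN.le_apply (neg_mem_Fp hf) (abs_le.1 h).1, hRN.apply_le hf (abs_le.1 h).2⟩

lemma le_abs_apply (hRN : IsRN p RN) (hf : f ∈ Fp p) (h : f ≤ |x|) : f ≤ |RN x| := by
  rcases le_abs'.1 h with hneg | hpos
  · exact le_abs'.2 (.inl (hRN.apply_le (neg_mem_Fp hf) hneg))
  · exact (hRN.le_apply hf hpos).trans (le_abs_self _)

lemma add_apply_div_two_le (hRN : IsRN p RN) (hf : f ∈ Fp p) (h : f < RN x) :
    (f + RN x) / 2 ≤ x := by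
  have := hRN.2 x f hf
  grind

lemma abs_apply_sub_le (hRN : IsRN p RN) (hp : p ≠ 0) (h : |x| ≤ (2 : ℝ) ^ k) :
    |RN x - x| ≤ (2 : ℝ) ^ (k - p) / 2 := by
  obtain ⟨f, hf, hfx⟩ := exists_mem_dyadicGrid_abs_sub_le (k - p) x
  refine (hRN.2 x f (mem_Fp_of_abs_le hp hf ?_)).trans hfx
  rw [sub_add_cancel]
  have habs : |f| ∈ dyadicGrid (k - p) := abs_mem_iff.2 hf
  by_contra! hlt
  have hstep : (2 : ℝ) ^ k + 2 ^ (k - p) ≤ |f| :=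
    add_zpow_le_of_mem_dyadicGrid (zpow_mem_dyadicGrid (by omega)) habs hlt
  linarith [abs_sub_abs_le_abs_sub f x, zpow_pos (two_pos (α := ℝ)) (k - p)]

lemma abs_apply_sub_le_of_abs_apply_lt (hRN : IsRN p RN) (hp : p ≠ 0)
    (h : |RN x| < (2 : ℝ) ^ k) : |RN x - x| ≤ (2 : ℝ) ^ (k - p) / 2 := by
  refine hRN.abs_apply_sub_le hp ?_
  by_contra! hlt
  exact h.not_ge (hRN.le_abs_apply (zpow_mem_Fp hp k) hlt.le)

end IsRN

/-- The pair `(xh, xl)` is a double-word number for the rounding `RN`. Membership of `xh` in `F_p`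
is not recorded, as `xh` is a value of `RN`. -/
structure IsDoubleWord (p : ℕ) (RN : ℝ → ℝ) (xh xl : ℝ) : Prop where
  low_mem : xl ∈ Fp p
  round_add : RN (xh + xl) = xh

namespace IsDoubleWord

variable {p : ℕ} {RN : ℝ → ℝ} {k : ℤ} {f xh xl yh yl : ℝ}

lemma high_mem (h : IsDoubleWord p RN xh xl) (hRN : IsRN p RN) : xh ∈ Fp p :=
  h.round_add ▸ hRN.1 _

protected lemma neg (h : IsDoubleWord p RN xh xl) (hsym : SymRN RN) :
    IsDoubleWord p RN (-xh) (-xl) :=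
  ⟨neg_mem_Fp h.low_mem, by rw [← neg_add, hsym, h.round_add]⟩

lemma abs_low_le (h : IsDoubleWord p RN xh xl) (hRN : IsRN p RN) (hp : p ≠ 0)
    (hxh : |xh| < (2 : ℝ) ^ k) : |xl| ≤ (2 : ℝ) ^ (k - p) / 2 := by
  have herr := hRN.abs_apply_sub_le_of_abs_apply_lt hp (x := xh + xl) (h.round_add.symm ▸ hxh)
  rwa [h.round_add, sub_add_cancel_left, abs_neg] at herr

lemma half_sub_le_low (h : IsDoubleWord p RN xh xl) (hRN : IsRN p RN) (hf : f ∈ Fp p)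
    (hfx : f < xh) : (f - xh) / 2 ≤ xl := by
  have hmid := hRN.add_apply_div_two_le hf (x := xh + xl) (h.round_add.symm ▸ hfx)
  rw [h.round_add] at hmid
  linarith

lemma sum_ne_zero (hx : IsDoubleWord p RN xh xl) (hy : IsDoubleWord p RN yh yl) (hsym : SymRN RN)
    (hne : xh + yh ≠ 0) : xh + xl + yh + yl ≠ 0 := by
  intro hS
  apply hne
  rw [← hx.round_add, eq_neg_of_add_eq_zero_left ((add_assoc _ yh yl).symm.trans hS), hsym,
    hy.round_add, neg_add_cancel]

end IsDoubleWord

/-- Fast2Sum (Dekker) with rounding function `R`, as in the last three steps of `sloppyAdd`. -/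
noncomputable def fast2Sum (R : ℝ → ℝ) (s v : ℝ) : ℝ × ℝ :=
  (R (s + v), R (v - R (R (s + v) - s)))

lemma sloppyAdd_neg {RN : ℝ → ℝ} (hsym : SymRN RN) (xh xl yh yl : ℝ) :
    sloppyAdd RN (-xh) (-xl) (-yh) (-yl) = -sloppyAdd RN xh xl yh yl := by
  have hadd (a b : ℝ) : RN (-a + -b) = -RN (a + b) := by rw [← neg_add, hsym]
  have hsub (a b : ℝ) : RN (-a - -b) = -RN (a - b) := by rw [← neg_sub', hsym]
  simp only [sloppyAdd, hadd, hsub, Prod.neg_mk]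

namespace IsRN

variable {p : ℕ} {RN : ℝ → ℝ} {k : ℤ} {s v t xh xl yh yl : ℝ}

lemma sloppyAdd_eq_fast2Sum (hRN : IsRN p RN) (hxh : xh ∈ Fp p) (hyh : yh ∈ Fp p)
    (hs : xh + yh ∈ Fp p) :
    sloppyAdd RN xh xl yh yl = fast2Sum RN (xh + yh) (RN (xl + yl)) := by
  have hzero : RN 0 = 0 := hRN.apply_eq_self (zero_mem_Fp p)
  simp only [sloppyAdd, fast2Sum, hRN.apply_eq_self hs, hRN.apply_eq_self hxh,
    hRN.apply_eq_self hyh, hRN.apply_eq_self (hRN.1 (xl + yl)), add_sub_cancel_right,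
    add_sub_cancel_left, sub_self, hzero, add_zero, zero_add]

lemma sloppyAdd_comm (hRN : IsRN p RN) (hxh : xh ∈ Fp p) (hyh : yh ∈ Fp p)
    (hs : xh + yh ∈ Fp p) : sloppyAdd RN xh xl yh yl = sloppyAdd RN yh yl xh xl := by
  rw [hRN.sloppyAdd_eq_fast2Sum hxh hyh hs,
    hRN.sloppyAdd_eq_fast2Sum hyh hxh (add_comm xh yh ▸ hs), add_comm xh, add_comm xl]

lemma fast2Sum_eq_of_add_mem (hRN : IsRN p RN) (hv : v ∈ Fp p) (hsv : s + v ∈ Fp p) :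
    fast2Sum RN s v = (s + v, 0) := by
  rw [fast2Sum, hRN.apply_eq_self hsv, add_sub_cancel_left, hRN.apply_eq_self hv, sub_self,
    hRN.apply_eq_self (zero_mem_Fp p)]

lemma abs_fast2Sum_sub_le (hRN : IsRN p RN) (hp : p ≠ 0) (hs : |s| ≤ (2 : ℝ) ^ k)
    (hv : |v| ≤ (2 : ℝ) ^ k) :
    |(fast2Sum RN s v).1 + (fast2Sum RN s v).2 - (s + v)| ≤ 3 / 2 * (2 : ℝ) ^ (k - p) := by
  have hk : (2 : ℝ) ^ (k + 1) = 2 ^ k * 2 := zpow_add_one₀ two_ne_zero k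
  have hkp : (2 : ℝ) ^ (k + 1 - p) = 2 ^ (k - p) * 2 := by
    rw [← zpow_add_one₀ two_ne_zero]; congr 1; ring
  have hh : (2 : ℝ) ^ (k + 1 - p) ≤ 2 ^ k := zpow_le_zpow_right₀ one_le_two (by omega)
  have hround {x : ℝ} (hx : |x| ≤ 2 ^ k * 2) : |RN x - x| ≤ 2 ^ (k - p) := by
    have := hRN.abs_apply_sub_le hp (hk ▸ hx)
    linarith
  simp only [fast2Sum]
  set z := RN (s + v)
  set d := RN (z - s)
  have hz : |z - (s + v)| ≤ 2 ^ (k - p) := hround (by linarith [abs_add_le s v])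
  have hd : |d - (z - s)| ≤ 2 ^ (k - p) := hround (by grind)
  have hl : |RN (v - d) - (v - d)| ≤ 2 ^ (k - p) / 2 := hRN.abs_apply_sub_le hp (by grind)
  -- The rounding error of `z` cancels.
  calc |z + RN (v - d) - (s + v)| = |(RN (v - d) - (v - d)) - (d - (z - s))| := by congr 1; ring
    _ ≤ |RN (v - d) - (v - d)| + |d - (z - s)| := abs_sub _ _
    _ ≤ 3 / 2 * 2 ^ (k - p) := by linarith

lemma abs_fast2Sum_zpow_sub_le_of_le (hRN : IsRN p RN) (hp : p ≠ 0) (hlo : -(2 : ℝ) ^ k ≤ t)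
    (hhi : t ≤ -((2 : ℝ) ^ k / 2)) :
    |(fast2Sum RN (2 ^ k) (RN t)).1 + (fast2Sum RN (2 ^ k) (RN t)).2 - (2 ^ k + t)| ≤
      (2 : ℝ) ^ (k - p) / 2 := by
  have hg : (0 : ℝ) < 2 ^ k := by positivity
  have hg_mem : (2 : ℝ) ^ k ∈ Fp p := zpow_mem_Fp hp k
  have hhalf_mem : (2 : ℝ) ^ k / 2 ∈ Fp p := by
    rw [div_eq_mul_inv, ← zpow_sub_one₀ two_ne_zero]; exact zpow_mem_Fp hp _
  have hvlo : -(2 : ℝ) ^ k ≤ RN t := hRN.le_apply (neg_mem_Fp hg_mem) hlo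
  have hvhi : RN t ≤ -((2 : ℝ) ^ k / 2) := hRN.apply_le (neg_mem_Fp hhalf_mem) hhi
  have hexact : (2 : ℝ) ^ k + RN t ∈ Fp p := by
    simpa using sub_mem_Fp_of_le_two_mul hg_mem (neg_mem_Fp (hRN.1 t)) (by linarith) (by linarith)
  rw [hRN.fast2Sum_eq_of_add_mem (hRN.1 t) hexact, add_zero, add_sub_add_left_eq_sub]
  exact hRN.abs_apply_sub_le hp (abs_le.2 ⟨hlo, by linarith⟩)

lemma abs_fast2Sum_zpow_sub_le (hRN : IsRN p RN) (hp : p ≠ 0) (ht : |t| ≤ (2 : ℝ) ^ (k + 1)) :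
    |(fast2Sum RN (2 ^ k) (RN t)).1 + (fast2Sum RN (2 ^ k) (RN t)).2 - (2 ^ k + t)| ≤
      4 * (2 : ℝ) ^ (k - p) := by
  have hkp : (2 : ℝ) ^ (k + 1 - p) = 2 ^ (k - p) * 2 := by
    rw [← zpow_add_one₀ two_ne_zero]; congr 1; ring
  have hg : |(2 : ℝ) ^ k| ≤ 2 ^ (k + 1) := by
    rw [abs_of_pos (by positivity)]
    exact zpow_le_zpow_right₀ one_le_two (by omega)
  have hv : |RN t - t| ≤ (2 : ℝ) ^ (k + 1 - p) / 2 := hRN.abs_apply_sub_le hp ht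
  have hfast := hRN.abs_fast2Sum_sub_le hp hg (hRN.abs_apply_le (zpow_mem_Fp hp _) ht)
  set r := (fast2Sum RN (2 ^ k) (RN t)).1 + (fast2Sum RN (2 ^ k) (RN t)).2
  calc |r - (2 ^ k + t)| = |(r - (2 ^ k + RN t)) + (RN t - t)| := by congr 1; ring
    _ ≤ |r - (2 ^ k + RN t)| + |RN t - t| := abs_add_le _ _
    _ ≤ 4 * 2 ^ (k - p) := by linarith

end IsRN

lemma zpow_le_zpow_add_of_mem_Fp {p : ℕ} {k : ℤ} {a b : ℝ} (hp : p ≠ 0) (ha : a ∈ Fp p)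
    (hb : b ∈ Fp p) (halo : -((2 : ℝ) ^ k / 2) ≤ a) (hblo : -((2 : ℝ) ^ k / 2) ≤ b)
    (hpos : 0 < (2 : ℝ) ^ k + (a + b)) : (2 : ℝ) ^ (k - p - 1) ≤ 2 ^ k + (a + b) := by
  have hquarter : (2 : ℝ) ^ (k - 2) = 2 ^ k / 4 := by
    rw [zpow_sub₀ two_ne_zero]; norm_num
  have hgrid {x : ℝ} (hx : x ∈ Fp p) (hle : x ≤ -(2 ^ k / 4)) : x ∈ dyadicGrid (k - p - 1) := by
    refine mem_dyadicGrid_of_le_abs hx ?_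
    rw [show k - p - 1 + p - 1 = k - 2 by ring, hquarter]
    exact le_abs'.2 (.inl hle)
  by_cases hsmall : a ≤ -((2 : ℝ) ^ k / 4) ∧ b ≤ -((2 : ℝ) ^ k / 4)
  · exact zpow_le_of_mem_dyadicGrid (add_mem (zpow_mem_dyadicGrid (by omega))
      (add_mem (hgrid ha hsmall.1) (hgrid hb hsmall.2))) hpos
  · calc (2 : ℝ) ^ (k - p - 1) ≤ 2 ^ (k - 2) := zpow_le_zpow_right₀ one_le_two (by omega)
      _ ≤ 2 ^ k + (a + b) := by grind

section ErrorBound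

variable {p : ℕ} {RN : ℝ → ℝ} {k : ℤ} {xh xl yh yl : ℝ}

lemma abs_fast2Sum_zpow_sub_lt (hp : 2 ≤ p) (hRN : IsRN p RN) (hxl : xl ∈ Fp p) (hyl : yl ∈ Fp p)
    (hxlo : -((2 : ℝ) ^ k / 2) ≤ xl) (hxhi : xl ≤ (2 : ℝ) ^ k) (hyl_abs : |yl| ≤ (2 : ℝ) ^ k / 2)
    (hne : (2 : ℝ) ^ k + (xl + yl) ≠ 0) :
    |(fast2Sum RN (2 ^ k) (RN (xl + yl))).1 + (fast2Sum RN (2 ^ k) (RN (xl + yl))).2 -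
      (2 ^ k + (xl + yl))| < 2 * |2 ^ k + (xl + yl)| := by
  have hp0 : p ≠ 0 := by omega
  obtain ⟨hylo, hyhi⟩ := abs_le.1 hyl_abs
  have hpos : 0 < (2 : ℝ) ^ k + (xl + yl) := lt_of_le_of_ne (by linarith) hne.symm
  rw [abs_of_pos hpos]
  rcases le_or_gt (xl + yl) (-((2 : ℝ) ^ k / 2)) with hle | hgt
  · have herr := hRN.abs_fast2Sum_zpow_sub_le_of_le hp0 (by linarith) hle
    have hsum := zpow_le_zpow_add_of_mem_Fp hp0 hxl hyl hxlo hylo hpos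
    rw [zpow_sub_one₀ two_ne_zero, ← div_eq_mul_inv] at hsum
    linarith
  · have hk : (2 : ℝ) ^ (k + 1) = 2 ^ k * 2 := zpow_add_one₀ two_ne_zero k
    have hh : 4 * (2 : ℝ) ^ (k - p) ≤ 2 ^ k :=
      calc 4 * (2 : ℝ) ^ (k - p) = 2 ^ (2 + (k - p)) := by
            rw [zpow_add₀ two_ne_zero]; norm_num
        _ ≤ 2 ^ k := zpow_le_zpow_right₀ one_le_two (by omega)
    have herr := hRN.abs_fast2Sum_zpow_sub_le hp0 (t := xl + yl)
      (abs_le.2 ⟨by linarith, by linarith⟩)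
    linarith

lemma abs_sloppyAdd_sub_lt_of_pos (hp : 2 ≤ p) (hRN : IsRN p RN) (hx : IsDoubleWord p RN xh xl)
    (hy : IsDoubleWord p RN yh yl) (hyh : yh < 0) (hcons : Consecutive p (-yh) xh)
    (hne : xh + xl + yh + yl ≠ 0) :
    |(sloppyAdd RN xh xl yh yl).1 + (sloppyAdd RN xh xl yh yl).2 - (xh + xl + yh + yl)| <
      2 * |xh + xl + yh + yl| := by
  have hp0 : p ≠ 0 := by omega
  obtain ⟨k, hgap, hle⟩ := hcons.exists_sub_eq_zpow hp0 (neg_pos.2 hyh)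
  rw [sub_neg_eq_add] at hgap
  have hlt : -yh < xh := hcons.lt
  -- `xh` may be the power of two `2 ^ (k + p)`, above which the spacing doubles.
  have hxl_hi : |xl| ≤ (2 : ℝ) ^ k := by
    have := hx.abs_low_le hRN hp0 (k := k + p + 1) (by
      rw [abs_of_pos (by linarith)]
      exact hle.trans_lt (zpow_lt_zpow_right₀ one_lt_two (by omega)))
    rwa [show k + p + 1 - p = k + 1 by ring, zpow_add_one₀ two_ne_zero,
      mul_div_cancel_right₀ _ two_ne_zero] at this
  have hxl_lo : -((2 : ℝ) ^ k / 2) ≤ xl := by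
    linarith [hx.half_sub_le_low hRN hcons.left_mem hlt]
  have hyl_abs : |yl| ≤ (2 : ℝ) ^ k / 2 := by
    simpa using hy.abs_low_le hRN hp0 (k := k + p) (by rw [abs_of_neg hyh]; linarith)
  have hS : xh + xl + yh + yl = 2 ^ k + (xl + yl) := by rw [← hgap]; ring
  rw [hRN.sloppyAdd_eq_fast2Sum (hx.high_mem hRN) (hy.high_mem hRN) (hgap ▸ zpow_mem_Fp hp0 k),
    hS, hgap]
  exact abs_fast2Sum_zpow_sub_lt hp hRN hx.low_mem hy.low_mem hxl_lo (le_of_abs_le hxl_hi)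
    hyl_abs (hS ▸ hne)

lemma abs_sloppyAdd_sub_lt (hp : 2 ≤ p) (hRN : IsRN p RN) (hsym : SymRN RN)
    (hx : IsDoubleWord p RN xh xl) (hy : IsDoubleWord p RN yh yl) (hsign : xh * yh < 0)
    (hcons : Consecutive p |yh| |xh|) (hne : xh + xl + yh + yl ≠ 0) :
    |(sloppyAdd RN xh xl yh yl).1 + (sloppyAdd RN xh xl yh yl).2 - (xh + xl + yh + yl)| <
      2 * |xh + xl + yh + yl| := by
  rcases mul_neg_iff.1 hsign with ⟨hxh, hyh⟩ | ⟨hxh, hyh⟩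
  · rw [abs_of_pos hxh, abs_of_neg hyh] at hcons
    exact abs_sloppyAdd_sub_lt_of_pos hp hRN hx hy hyh hcons hne
  · rw [abs_of_neg hxh, abs_of_pos hyh, ← neg_neg yh] at hcons
    have hneg : -xh + -xl + -yh + -yl = -(xh + xl + yh + yl) := by ring
    have := abs_sloppyAdd_sub_lt_of_pos hp hRN (hx.neg hsym) (hy.neg hsym) (neg_neg_of_pos hyh)
      hcons (hneg ▸ neg_ne_zero.2 hne)
    rwa [hneg, sloppyAdd_neg hsym, Prod.fst_neg, Prod.snd_neg, ← neg_add, neg_sub_neg, abs_neg,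
      abs_sub_comm] at this

lemma Consecutive.add_mem_of_mul_neg (h : Consecutive p |yh| |xh|) (hsign : xh * yh < 0) :
    xh + yh ∈ Fp p := by
  have hsub := h.sub_mem (abs_pos.2 (right_ne_zero_of_mul hsign.ne))
  rcases mul_neg_iff.1 hsign with ⟨hxh, hyh⟩ | ⟨hxh, hyh⟩
  · simpa [abs_of_pos hxh, abs_of_neg hyh] using hsub
  · rw [abs_of_neg hxh, abs_of_pos hyh] at hsub
    simpa [add_comm] using neg_mem_Fp hsub

end ErrorBound

theorem sloppy_relerr_lt_two_of_consecutive_general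
    (p : ℕ) (hp : 2 ≤ p) (RN : ℝ → ℝ) (hRN : IsRN p RN) (hsym : SymRN RN)
    (xh xl yh yl : ℝ) (hx : IsDoubleWord p RN xh xl) (hy : IsDoubleWord p RN yh yl)
    (hsign : xh * yh < 0)
    (hconsec : |xh| ≠ |yh| ∧
      ¬∃ f ∈ Fp p, min |xh| |yh| < f ∧ f < max |xh| |yh|) :
    xh + xl + yh + yl ≠ 0 ∧
      |(sloppyAdd RN xh xl yh yl).1 + (sloppyAdd RN xh xl yh yl).2 -
          (xh + xl + yh + yl)| < 2 * |xh + xl + yh + yl| := by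
  obtain ⟨hne, hbetween⟩ := hconsec
  have hS : xh + xl + yh + yl ≠ 0 := hx.sum_ne_zero hy hsym fun h =>
    hne (by rw [eq_neg_of_add_eq_zero_left h, abs_neg])
  have hxm := hx.high_mem hRN
  have hym := hy.high_mem hRN
  refine ⟨hS, ?_⟩
  rcases hne.lt_or_gt with hlt | hlt
  · rw [min_eq_left hlt.le, max_eq_right hlt.le] at hbetween
    have hcons := Consecutive.of_not_exists_between (abs_mem_Fp hxm) (abs_mem_Fp hym) hlt hbetween
    have hsign' : yh * xh < 0 := mul_comm xh yh ▸ hsign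
    have hswap : xh + xl + yh + yl = yh + yl + xh + xl := by ring
    rw [hswap] at hS ⊢
    rw [← hRN.sloppyAdd_comm hym hxm (hcons.add_mem_of_mul_neg hsign')]
    exact abs_sloppyAdd_sub_lt hp hRN hsym hy hx hsign' hcons hS
  · rw [min_eq_right hlt.le, max_eq_left hlt.le] at hbetween
    have hcons := Consecutive.of_not_exists_between (abs_mem_Fp hym) (abs_mem_Fp hxm) hlt hbetween
    exact abs_sloppyAdd_sub_lt hp hRN hsym hx hy hsign hcons hS

theorem sloppy_relerr_lt_two_of_consecutive
    (p : ℕ) (hp : 6 ≤ p) (u : ℝ) (hu : u = (2 : ℝ) ^ (-(p : ℤ)))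
    (RN : ℝ → ℝ) (hRN : IsRN p RN) (hsym : SymRN RN)
    (hties : TiesToEven p RN ∨ TiesToAway p RN)
    (xh xl yh yl : ℝ)
    (hxh : xh ∈ Fp p) (hxl : xl ∈ Fp p) (hyh : yh ∈ Fp p) (hyl : yl ∈ Fp p)
    (hnx : RN (xh + xl) = xh) (hny : RN (yh + yl) = yh)
    (hsign : xh * yh < 0)
    (hconsec : |xh| ≠ |yh| ∧
      ¬∃ f ∈ Fp p, min |xh| |yh| < f ∧ f < max |xh| |yh|) :
    xh + xl + yh + yl ≠ 0 ∧
      |(sloppyAdd RN xh xl yh yl).1 + (sloppyAdd RN xh xl yh yl).2 -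
          (xh + xl + yh + yl)| < 2 * |xh + xl + yh + yl| :=
  sloppy_relerr_lt_two_of_consecutive_general p (by omega) RN hRN hsym xh xl yh yl ⟨hxl, hnx⟩
    ⟨hyl, hny⟩ hsign hconsec
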